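/- Let p₀,p₁,p₂,p₃ ∈ ℝ³ have all six pairwise distances in the interval [2, 2.51] (a quasi-regular tetrahedron), and suppose the circumradius of the simplex S = conv{p₀,p₁,p₂,p₃} is at most 1.41. Then Γ(S) ≤ 1 pt, where 1 pt = (4/3)·(3·arccos(1/3) − π) − δ_oct·(2√2/3) is the compression of the regular tetrahedron with edge length 2. -/

import Mathlib

open MeasureTheory Real

noncomputable section

abbrev E3 : Type := EuclideanSpace ℝ (Fin 3)

/-- The density of the regular octahedron. -/
def δoct : ℝ := (-3 * π + 12 * arccos (1 / Real.sqrt 3)) / Real.sqrt 8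

/-- The compression `Γ(S)` of the simplex `S = conv {p₀, p₁, p₂, p₃}`:
`Γ(S) = -δ_oct · vol S + vol (S ∩ (B(p₀,1) ∪ B(p₁,1) ∪ B(p₂,1) ∪ B(p₃,1)))`. -/
def Gamma (p₀ p₁ p₂ p₃ : E3) : ℝ :=
  -δoct * (volume (convexHull ℝ ({p₀, p₁, p₂, p₃} : Set E3))).toReal +
    (volume (convexHull ℝ ({p₀, p₁, p₂, p₃} : Set E3) ∩
      (Metric.closedBall p₀ 1 ∪ Metric.closedBall p₁ 1 ∪ Metric.closedBall p₂ 1 ∪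
        Metric.closedBall p₃ 1))).toReal

lemma meas_and {α : Type*} [MeasurableSpace α] {p q : α → Prop} (hp : MeasurableSet {x | p x})
    (hq : MeasurableSet {x | q x}) : MeasurableSet {x | p x ∧ q x} := hp.inter hq

/-- Coordinates `(x₂, (x₀, x₁))`. -/
def toProd (x : E3) : ℝ × ℝ × ℝ := (x 2, (x 0, x 1))

lemma toProd_mp : MeasurePreserving toProd := by
  have h1 := PiLp.volume_preserving_ofLp (Fin 3)
  have h2 := volume_preserving_piFinSuccAbove (fun _ : Fin 3 => ℝ) 2
  have h3 := (MeasurePreserving.id (volume : Measure ℝ)).prod (volume_preserving_finTwoArrow ℝ)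
  exact h3.comp (h2.comp h1)

/-- Mass of the radial part. -/
def radK : ENNReal :=
  ∫⁻ z : ℝ, ∫⁻ r in Set.Ioi (0 : ℝ),
    ENNReal.ofReal r * ({r : ℝ | r ^ 2 + z ^ 2 ≤ 1}.indicator 1 r)

lemma polar_vol (P : Set (ℝ × ℝ)) (hP : MeasurableSet P) (T : Set ℝ) (hT : MeasurableSet T)
    (hPT : ∀ r > 0, ∀ t ∈ Set.Ioo (-π) π, ((r * cos t, r * sin t) ∈ P ↔ t ∈ T)) :
    volume {x : E3 | x 0 ^ 2 + x 1 ^ 2 + x 2 ^ 2 ≤ 1 ∧ (x 0, x 1) ∈ P} =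
      radK * volume (T ∩ Set.Ioo (-π) π) := by
  set S : Set (ℝ × ℝ × ℝ) := {q | q.2.1 ^ 2 + q.2.2 ^ 2 + q.1 ^ 2 ≤ 1 ∧ q.2 ∈ P} with hS
  have hSm : MeasurableSet S := by
    apply meas_and
    · exact measurableSet_le (by fun_prop) (by fun_prop)
    · exact hP.preimage measurable_snd
  have e1 : {x : E3 | x 0 ^ 2 + x 1 ^ 2 + x 2 ^ 2 ≤ 1 ∧ (x 0, x 1) ∈ P} = toProd ⁻¹' S := by
    ext x; simp [toProd, hS]
  rw [e1, toProd_mp.measure_preimage hSm.nullMeasurableSet]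
  rw [Measure.volume_eq_prod, Measure.prod_apply hSm, radK, ← lintegral_mul_const']
  swap
  · exact ((measure_mono Set.inter_subset_right).trans_lt (by simp)).ne
  congr 1
  ext z
  have hsm : MeasurableSet (Prod.mk z ⁻¹' S) := hSm.preimage (by fun_prop)
  rw [← lintegral_indicator_one hsm, ← lintegral_comp_polarCoord_symm]
  have : ∀ p ∈ polarCoord.target, ENNReal.ofReal p.1 •
      (Prod.mk z ⁻¹' S).indicator (1 : ℝ × ℝ → ENNReal) (polarCoord.symm p) =
      (ENNReal.ofReal p.1 * ({r : ℝ | r ^ 2 + z ^ 2 ≤ 1}.indicator 1 p.1)) * T.indicator 1 p.2 := by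
    intro p hp
    simp only [polarCoord_target, Set.mem_prod, Set.mem_Ioi] at hp
    have h := hPT p.1 hp.1 p.2 hp.2
    rw [smul_eq_mul, mul_assoc]
    congr 1
    have hh : (p.1 * cos p.2) ^ 2 + (p.1 * sin p.2) ^ 2 = p.1 ^ 2 := by
      have := sin_sq_add_cos_sq p.2
      linear_combination p.1 ^ 2 * this
    by_cases c1 : p.1 ^ 2 + z ^ 2 ≤ 1 <;> by_cases c2 : p.2 ∈ T <;>
      simp [Set.indicator, hS, hh, h, c1, c2]
  rw [setLIntegral_congr_fun (polarCoord.open_target.measurableSet) this]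
  rw [polarCoord_target, Measure.volume_eq_prod, ← Measure.prod_restrict]
  have hm : Measurable fun r : ℝ => ENNReal.ofReal r *
      ({r : ℝ | r ^ 2 + z ^ 2 ≤ 1}.indicator (1 : ℝ → ENNReal) r) := by
    apply Measurable.mul (by fun_prop)
    exact measurable_one.indicator (measurableSet_le (by fun_prop) (by fun_prop))
  rw [lintegral_prod_mul hm.aemeasurable (measurable_one.indicator hT).aemeasurable]
  congr 1
  rw [lintegral_indicator_one hT, Measure.restrict_apply hT]

lemma ball_set : {x : E3 | x 0 ^ 2 + x 1 ^ 2 + x 2 ^ 2 ≤ 1} = Metric.closedBall 0 1 := by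
  ext x
  simp [EuclideanSpace.norm_eq, Fin.sum_univ_three]

lemma radK_eq : radK = ENNReal.ofReal (2 / 3) := by
  have h := polar_vol Set.univ MeasurableSet.univ Set.univ MeasurableSet.univ (by simp)
  simp only [Set.mem_univ, and_true, Set.univ_inter, volume_Ioo] at h
  rw [ball_set, EuclideanSpace.volume_closedBall_fin_three] at h
  have hpi := pi_pos
  have h4 : ENNReal.ofReal (1:ℝ) ^ 3 * ENNReal.ofReal (π * 4 / 3) =
      ENNReal.ofReal (2/3) * ENNReal.ofReal (π - -π) := by
    rw [← ENNReal.ofReal_mul (by norm_num)]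
    simp only [ENNReal.ofReal_one, one_pow, one_mul]
    congr 1; ring
  rw [h4] at h
  exact ((ENNReal.mul_left_inj (by simp; linarith) (by simp)).1 h).symm

/-- the wedge in coordinates -/
lemma arc_vol (φ : ℝ) (h0 : -π ≤ φ) (h1 : φ ≤ π) :
    volume ({t | 0 < cos t ∧ 0 < cos (t - φ)} ∩ Set.Ioo (-π) π) = ENNReal.ofReal (π - |φ|) := by
  have hpi := pi_pos
  have hc : ∀ t ∈ Set.Ioo (-π) π, 0 < cos t → t ∈ Set.Ioo (-(π/2)) (π/2) := by
    intro t ht hct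
    by_contra hcon
    simp only [Set.mem_Ioo, not_and_or, not_lt] at hcon ht
    rcases hcon with h | h
    · have := cos_nonpos_of_pi_div_two_le_of_le (x := -t) (by linarith) (by linarith)
      rw [cos_neg] at this; linarith
    · have := cos_nonpos_of_pi_div_two_le_of_le (x := t) (by linarith) (by linarith)
      linarith
  rcases le_total 0 φ with hφ | hφ
  · have : {t | 0 < cos t ∧ 0 < cos (t - φ)} ∩ Set.Ioo (-π) π = Set.Ioo (φ - π/2) (π/2) := by
      ext t
      constructor
      · rintro ⟨⟨ha, hb⟩, ht⟩
        have h := hc t ht ha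
        refine ⟨?_, h.2⟩
        by_contra hcon
        have := cos_nonpos_of_pi_div_two_le_of_le (x := φ - t) (by linarith) (by linarith [h.1])
        rw [← cos_neg] at this; ring_nf at this hb; linarith
      · rintro ⟨ha, hb⟩
        refine ⟨⟨cos_pos_of_mem_Ioo ⟨by linarith, by linarith⟩,
          cos_pos_of_mem_Ioo ⟨by linarith, by linarith⟩⟩, by linarith, by linarith⟩
    rw [this, volume_Ioo, abs_of_nonneg hφ]; congr 1; ring
  · have : {t | 0 < cos t ∧ 0 < cos (t - φ)} ∩ Set.Ioo (-π) π = Set.Ioo (-(π/2)) (φ + π/2) := by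
      ext t
      constructor
      · rintro ⟨⟨ha, hb⟩, ht⟩
        have h := hc t ht ha
        refine ⟨h.1, ?_⟩
        by_contra hcon
        have := cos_nonpos_of_pi_div_two_le_of_le (x := t - φ) (by linarith) (by linarith [h.2])
        linarith
      · rintro ⟨ha, hb⟩
        refine ⟨⟨cos_pos_of_mem_Ioo ⟨by linarith, by linarith⟩,
          cos_pos_of_mem_Ioo ⟨by linarith, by linarith⟩⟩, by linarith, by linarith⟩
    rw [this, volume_Ioo, abs_of_nonpos hφ]; congr 1; ring

lemma wedge_coord (φ : ℝ) (h0 : -π ≤ φ) (h1 : φ ≤ π) :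
    volume {x : E3 | x 0 ^ 2 + x 1 ^ 2 + x 2 ^ 2 ≤ 1 ∧ (0 < x 0 ∧ 0 < cos φ * x 0 + sin φ * x 1)} =
      ENNReal.ofReal (2 / 3 * (π - |φ|)) := by
  have h := polar_vol {p | 0 < p.1 ∧ 0 < cos φ * p.1 + sin φ * p.2}
    (meas_and (measurableSet_lt (by fun_prop) (by fun_prop))
      (measurableSet_lt (by fun_prop) (by fun_prop)))
    {t | 0 < cos t ∧ 0 < cos (t - φ)}
    (meas_and (measurableSet_lt (by fun_prop) (by fun_prop))
      (measurableSet_lt (by fun_prop) (by fun_prop))) (by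
      intro r hr t _
      have : cos φ * (r * cos t) + sin φ * (r * sin t) = r * cos (t - φ) := by
        rw [cos_sub]; ring
      simp only [Set.mem_ofPred_eq, this, mul_pos_iff_of_pos_left hr])
  rw [arc_vol φ h0 h1, radK_eq, ← ENNReal.ofReal_mul (by norm_num)] at h
  exact h

lemma wedge_vol (a b : E3) (ha : a ≠ 0) (hb : b ≠ 0) :
    volume {x : E3 | ‖x‖ ≤ 1 ∧ (0 < inner ℝ a x ∧ 0 < inner ℝ b x)} =
      ENNReal.ofReal (2 / 3 * (π - InnerProductGeometry.angle a b)) := by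
  have hfr : Module.finrank ℝ E3 = Fintype.card (Fin 3) := by simp
  set f : Fin 3 → E3 := ![a, b, 0] with hf
  set B := InnerProductSpace.gramSchmidtOrthonormalBasis hfr f with hB
  have i10 : B.repr a 1 = 0 := by
    rw [B.repr_apply_apply]
    exact InnerProductSpace.gramSchmidtOrthonormalBasis_inv_triangular hfr f (i := 0) (j := 1) (by decide)
  have i20 : B.repr a 2 = 0 := by
    rw [B.repr_apply_apply]
    exact InnerProductSpace.gramSchmidtOrthonormalBasis_inv_triangular hfr f (i := 0) (j := 2) (by decide)
  have i21 : B.repr b 2 = 0 := by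
    rw [B.repr_apply_apply]
    exact InnerProductSpace.gramSchmidtOrthonormalBasis_inv_triangular hfr f (i := 1) (j := 2) (by decide)
  have hna : 0 < ‖a‖ := norm_pos_iff.2 ha
  have hnb : 0 < ‖b‖ := norm_pos_iff.2 hb
  have hB0 : B 0 = (‖a‖⁻¹ : ℝ) • a := by
    have : InnerProductSpace.gramSchmidtNormed ℝ f 0 = (‖a‖⁻¹ : ℝ) • a := by
      have h0 : InnerProductSpace.gramSchmidt ℝ f 0 = a :=
        InnerProductSpace.gramSchmidt_bot ℝ f
      simp [InnerProductSpace.gramSchmidtNormed, h0]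
    rw [hB, InnerProductSpace.gramSchmidtOrthonormalBasis_apply, this]
    rw [this]; simp [ha]
  have i00 : B.repr a 0 = ‖a‖ := by
    rw [B.repr_apply_apply, hB0, inner_smul_left, real_inner_self_eq_norm_sq]
    simp; field_simp
  set φ := InnerProductGeometry.angle a b
  have hin : ∀ x y : E3, inner ℝ x y =
      B.repr x 0 * B.repr y 0 + B.repr x 1 * B.repr y 1 + B.repr x 2 * B.repr y 2 := by
    intro x y
    rw [← B.repr.inner_map_map x y, PiLp.inner_apply, Fin.sum_univ_three]
    simp; ring
  have j0 : B.repr b 0 = ‖b‖ * cos φ := by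
    have h1 := InnerProductGeometry.cos_angle_mul_norm_mul_norm a b
    rw [hin, i00, i10, i20] at h1
    have : ‖a‖ * (B.repr b 0 - ‖b‖ * cos φ) = 0 := by linear_combination -h1
    rcases mul_eq_zero.1 this with h | h <;> linarith
  have j1 : (B.repr b 1) ^ 2 = (‖b‖ * sin φ) ^ 2 := by
    have h2 := hin b b
    rw [real_inner_self_eq_norm_sq, i21, j0] at h2
    have := sin_sq_add_cos_sq φ
    linear_combination -h2 - ‖b‖^2 * this
  have hφ0 := InnerProductGeometry.angle_nonneg a b
  have hφ1 := InnerProductGeometry.angle_le_pi a b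
  obtain ⟨ψ, hψ, hψ0, hψ1⟩ : ∃ ψ : ℝ, |ψ| = φ ∧ B.repr b 0 = ‖b‖ * cos ψ ∧
      B.repr b 1 = ‖b‖ * sin ψ := by
    rcases sq_eq_sq_iff_eq_or_eq_neg.1 j1 with h | h
    · exact ⟨φ, abs_of_nonneg hφ0, j0, h⟩
    · exact ⟨-φ, by rw [abs_neg, abs_of_nonneg hφ0], by rw [cos_neg, j0], by rw [sin_neg, h]; ring⟩
  have hψle := abs_le.1 (hψ.trans_le hφ1)
  have hm : MeasurableSet {x : E3 | x 0 ^ 2 + x 1 ^ 2 + x 2 ^ 2 ≤ 1 ∧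
      (0 < x 0 ∧ 0 < cos ψ * x 0 + sin ψ * x 1)} :=
    meas_and (measurableSet_le (by fun_prop) (by fun_prop))
      (meas_and (measurableSet_lt (by fun_prop) (by fun_prop))
      (measurableSet_lt (by fun_prop) (by fun_prop)))
  rw [← hψ, ← wedge_coord ψ hψle.1 hψle.2,
    ← B.measurePreserving_repr.measure_preimage hm.nullMeasurableSet]
  congr 1
  ext x
  have hx : ‖x‖ ≤ 1 ↔ B.repr x 0 ^ 2 + B.repr x 1 ^ 2 + B.repr x 2 ^ 2 ≤ 1 := by
    rw [← sq_le_one_iff₀ (norm_nonneg x), ← real_inner_self_eq_norm_sq, hin]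
    ring_nf
  have ha' : 0 < inner ℝ a x ↔ 0 < B.repr x 0 := by
    rw [hin, i00, i10, i20, zero_mul, zero_mul, add_zero, add_zero, mul_pos_iff_of_pos_left hna]
  have hb' : 0 < inner ℝ b x ↔ 0 < cos ψ * B.repr x 0 + sin ψ * B.repr x 1 := by
    have e : inner ℝ b x = ‖b‖ * (cos ψ * B.repr x 0 + sin ψ * B.repr x 1) := by
      rw [hin, hψ0, hψ1, i21]; ring
    rw [e, mul_pos_iff_of_pos_left hnb]
  simp only [Set.mem_ofPred_eq, Set.mem_preimage, hx, ha', hb']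

lemma girard (a b c : E3) (ha : a ≠ 0) (hb : b ≠ 0) (hc : c ≠ 0) :
    (volume {x : E3 | ‖x‖ ≤ 1 ∧ (0 < inner ℝ a x ∧ 0 < inner ℝ b x ∧ 0 < inner ℝ c x)}).toReal ≤
      (2 * π - InnerProductGeometry.angle a b - InnerProductGeometry.angle b c -
        InnerProductGeometry.angle a c) / 3 := by
  set H : E3 → Set E3 := fun a => {x : E3 | ‖x‖ ≤ 1 ∧ 0 < inner ℝ a x} with hH
  have hsub : ∀ a, H a ⊆ Metric.closedBall 0 1 := by
    intro a x hx; simpa using hx.1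
  have hball : volume.real (Metric.closedBall (0 : E3) 1) = 4 * π / 3 := by
    rw [measureReal_def, EuclideanSpace.volume_closedBall_fin_three]
    have := pi_pos
    simp only [ENNReal.ofReal_one, one_pow, one_mul]
    rw [ENNReal.toReal_ofReal (by positivity)]; ring
  have hbt : volume (Metric.closedBall (0 : E3) 1) ≠ ⊤ := measure_closedBall_lt_top.ne
  have hfin : ∀ s ⊆ Metric.closedBall (0 : E3) 1, volume s ≠ ⊤ := fun s hs =>
    ((measure_mono hs).trans_lt (lt_top_iff_ne_top.2 hbt)).ne
  have hmeas : ∀ a, MeasurableSet (H a) := fun a =>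
    meas_and (measurableSet_le (by fun_prop) (by fun_prop))
      (measurableSet_lt (by fun_prop) (by fun_prop))
  have hw : ∀ a b : E3, a ≠ 0 → b ≠ 0 →
      volume.real (H a ∩ H b) = 2 / 3 * (π - InnerProductGeometry.angle a b) := by
    intro a b ha hb
    have : H a ∩ H b = {x : E3 | ‖x‖ ≤ 1 ∧ (0 < inner ℝ a x ∧ 0 < inner ℝ b x)} := by
      ext x; simp [hH]; tauto
    rw [this, measureReal_def, wedge_vol a b ha hb, ENNReal.toReal_ofReal]
    have := InnerProductGeometry.angle_le_pi a b
    nlinarith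
  have hh : ∀ a : E3, a ≠ 0 → volume.real (H a) = 2 / 3 * π := by
    intro a ha
    have := hw a a ha ha
    rwa [Set.inter_self, InnerProductGeometry.angle_self ha, sub_zero] at this
  have e : {x : E3 | ‖x‖ ≤ 1 ∧ (0 < inner ℝ a x ∧ 0 < inner ℝ b x ∧ 0 < inner ℝ c x)} =
      (H a ∩ H c) ∩ (H b ∩ H c) := by
    ext x; simp [hH]; tauto
  rw [e, ← measureReal_def]
  have hub : H a ∪ H b ⊆ Metric.closedBall 0 1 := Set.union_subset (hsub a) (hsub b)
  have u1 := measureReal_union_add_inter (μ := volume) (s := H a) (t := H b) (hmeas b)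
    (hfin _ (hsub a)) (hfin _ (hsub b))
  have u2 := measureReal_union_add_inter (μ := volume) (s := H a ∪ H b) (t := H c) (hmeas c)
    (hfin _ hub) (hfin _ (hsub c))
  rw [Set.union_inter_distrib_right] at u2
  have u3 := measureReal_union_add_inter (μ := volume) (s := H a ∩ H c) (t := H b ∩ H c)
    ((hmeas b).inter (hmeas c))
    (hfin _ (Set.inter_subset_left.trans (hsub a))) (hfin _ (Set.inter_subset_left.trans (hsub b)))
  set X := (H a ∩ H c) ∩ (H b ∩ H c)
  have hXm : MeasurableSet X := ((hmeas a).inter (hmeas c)).inter ((hmeas b).inter (hmeas c))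
  have hneg : volume.real (Neg.neg ⁻¹' X) = volume.real X := by
    rw [measureReal_def, (Measure.measurePreserving_neg (volume : Measure E3)).measure_preimage
      hXm.nullMeasurableSet, measureReal_def]
  have hdisj : Disjoint (H a ∪ H b ∪ H c) (Neg.neg ⁻¹' X) := by
    rw [Set.disjoint_left]
    intro x hx hx'
    simp only [X, hH, Set.mem_preimage, Set.mem_inter_iff, Set.mem_ofPred_eq, inner_neg_right,
      Set.mem_union] at hx hx'
    obtain ⟨⟨⟨_, h1⟩, ⟨_, h2⟩⟩, ⟨_, h3⟩, _⟩ := hx'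
    rcases hx with (⟨_, h⟩ | ⟨_, h⟩) | ⟨_, h⟩ <;> linarith
  have hsubn : (Neg.neg ⁻¹' X : Set E3) ⊆ Metric.closedBall 0 1 := by
    intro x hx
    have := hx.1.1.1
    simpa using this
  have hUsub : H a ∪ H b ∪ H c ⊆ Metric.closedBall 0 1 := Set.union_subset hub (hsub c)
  have hle := measureReal_mono (Set.union_subset hUsub hsubn) hbt
  rw [measureReal_union hdisj (hXm.preimage measurable_neg) (hfin _ hUsub) (hfin _ hsubn),
    hneg, hball] at hle
  rw [hh a ha, hh b hb, hw a b ha hb] at u1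
  rw [hh c hc] at u2
  rw [hw a c ha hc, hw b c hb hc] at u3
  linarith

set_option maxHeartbeats 2000000 in
lemma trihedral_trig (a b c p q r D A N1 N2 N3 θ1 θ2 θ3 : ℝ)
    (hD : 0 < D) (hA : 0 < A)
    (hN1 : 0 < N1) (hN2 : 0 < N2) (hN3 : 0 < N3)
    (sN1 : N1 ^ 2 = b ^ 2 * c ^ 2 - p ^ 2) (sN2 : N2 ^ 2 = c ^ 2 * a ^ 2 - q ^ 2)
    (sN3 : N3 ^ 2 = a ^ 2 * b ^ 2 - r ^ 2)
    (sD : D ^ 2 = a^2*b^2*c^2 + 2*p*q*r - a^2*p^2 - b^2*q^2 - c^2*r^2)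
    (hAe : A = a*b*c + a*p + b*q + c*r)
    (c1 : cos θ1 * (N2 * N3) = p * a ^ 2 - q * r) (s1 : sin θ1 * (N2 * N3) = a * D)
    (c2 : cos θ2 * (N3 * N1) = q * b ^ 2 - r * p) (s2 : sin θ2 * (N3 * N1) = b * D)
    (c3 : cos θ3 * (N1 * N2) = r * c ^ 2 - p * q) (s3 : sin θ3 * (N1 * N2) = c * D)
    (h1 : θ1 ≤ π) (h2 : θ2 ≤ π) (h3 : θ3 ≤ π) :
    θ1 + θ2 + θ3 - π ≤ 2 * arctan (D / A) := by
  set τ := arctan (D / A) with hτ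
  have hτ0 : 0 < τ := arctan_pos.2 (by positivity)
  set M := √(A ^ 2 + D ^ 2) with hM
  have hM0 : 0 < M := Real.sqrt_pos.2 (by positivity)
  have hM2 : M ^ 2 = A ^ 2 + D ^ 2 := Real.sq_sqrt (by positivity)
  have hs : √(1 + (D / A) ^ 2) = M / A := by
    rw [Real.sqrt_eq_iff_mul_self_eq (by positivity) (by positivity)]
    field_simp; linarith
  have hcosτ : cos τ * M = A := by
    rw [hτ, cos_arctan, hs]; field_simp
  have hsinτ : sin τ * M = D := by
    rw [hτ, sin_arctan, hs]; field_simp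
  have hN : (N1 * N2 * N3) ^ 2 = (b*c-p)*(c*a-q)*(a*b-r)/2 * M ^ 2 := by
    rw [hM2, mul_pow, mul_pow, sN1, sN2, sN3, sD, hAe]; ring
  have hNpos : 0 < (N1 * N2 * N3) ^ 2 := by positivity
  have key : Complex.exp ((θ1 + θ2 + θ3 : ℝ) * Complex.I) =
      Complex.exp ((2 * τ + π : ℝ) * Complex.I) := by
    have e : ∀ θ : ℝ, Complex.exp (θ * Complex.I) = (cos θ : ℂ) + (sin θ : ℂ) * Complex.I := by
      intro θ; rw [Complex.exp_mul_I, Complex.ofReal_cos, Complex.ofReal_sin]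
    have l : Complex.exp ((θ1 + θ2 + θ3 : ℝ) * Complex.I) =
        ((cos θ1 : ℂ) + (sin θ1 : ℂ) * Complex.I) * ((cos θ2 : ℂ) + (sin θ2 : ℂ) * Complex.I) *
        ((cos θ3 : ℂ) + (sin θ3 : ℂ) * Complex.I) := by
      rw [← e, ← e, ← e, ← Complex.exp_add, ← Complex.exp_add]; push_cast; ring_nf
    have r' : Complex.exp ((2 * τ + π : ℝ) * Complex.I) =
        -((cos τ : ℂ) + (sin τ : ℂ) * Complex.I) ^ 2 := by
      rw [← e, ← Complex.exp_nat_mul]; push_cast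
      rw [add_mul, Complex.exp_add, Complex.exp_pi_mul_I]; ring_nf
    have hne : (((N1 * N2 * N3) ^ 2 : ℝ) : ℂ) ≠ 0 := by
      exact_mod_cast hNpos.ne'
    apply mul_left_cancel₀ hne
    rw [l, r']
    have hI := Complex.I_sq
    have L1 : (((N1 * N2 * N3) ^ 2 : ℝ) : ℂ) * (((cos θ1 : ℂ) + (sin θ1 : ℂ) * Complex.I) *
        ((cos θ2 : ℂ) + (sin θ2 : ℂ) * Complex.I) * ((cos θ3 : ℂ) + (sin θ3 : ℂ) * Complex.I)) =
        (((cos θ1 * (N2 * N3) : ℝ) : ℂ) + ((sin θ1 * (N2 * N3) : ℝ) : ℂ) * Complex.I) *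
        (((cos θ2 * (N3 * N1) : ℝ) : ℂ) + ((sin θ2 * (N3 * N1) : ℝ) : ℂ) * Complex.I) *
        (((cos θ3 * (N1 * N2) : ℝ) : ℂ) + ((sin θ3 * (N1 * N2) : ℝ) : ℂ) * Complex.I) := by
      push_cast; ring
    have R1 : (((N1 * N2 * N3) ^ 2 : ℝ) : ℂ) * (-((cos τ : ℂ) + (sin τ : ℂ) * Complex.I) ^ 2) =
        -(((b*c-p)*(c*a-q)*(a*b-r)/2 : ℝ) : ℂ) *
          (((cos τ * M : ℝ) : ℂ) + ((sin τ * M : ℝ) : ℂ) * Complex.I) ^ 2 := by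
      rw [hN]; push_cast; ring
    rw [L1, R1, c1, c2, c3, s1, s2, s3, hcosτ, hsinτ]
    have sDc : (D : ℂ) ^ 2 = a^2*b^2*c^2 + 2*p*q*r - a^2*p^2 - b^2*q^2 - c^2*r^2 := by
      exact_mod_cast sD
    have hre : (p * a ^ 2 - q * r) * (q * b ^ 2 - r * p) * (r * c ^ 2 - p * q) -
        (p * a ^ 2 - q * r) * (b * D) * (c * D) - (a * D) * (q * b ^ 2 - r * p) * (c * D)
        - (a * D) * (b * D) * (r * c ^ 2 - p * q) =
        -((b*c-p)*(c*a-q)*(a*b-r)/2) * (A ^ 2 - D ^ 2) := by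
      rw [hAe]
      linear_combination (-((p * a ^ 2 - q * r) * b * c + a * c * (q * b ^ 2 - r * p) +
        a * b * (r * c ^ 2 - p * q)) - ((b*c-p)*(c*a-q)*(a*b-r)/2)) * sD
    have him : (a * D) * (q * b ^ 2 - r * p) * (r * c ^ 2 - p * q) +
        (p * a ^ 2 - q * r) * (b * D) * (r * c ^ 2 - p * q) +
        (p * a ^ 2 - q * r) * (q * b ^ 2 - r * p) * (c * D) - (a * D) * (b * D) * (c * D) =
        -((b*c-p)*(c*a-q)*(a*b-r)/2) * (2 * A * D) := by
      rw [hAe]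
      linear_combination (- a * b * c * D) * sD
    apply Complex.ext
    · rw [← sub_eq_zero] at hre ⊢
      rw [← hre]
      simp [pow_two]
      ring
    · rw [← sub_eq_zero] at him ⊢
      rw [← him]
      simp [pow_two]
      ring
  rw [Complex.exp_eq_exp_iff_exists_int] at key
  obtain ⟨n, hn⟩ := key
  have hn' : θ1 + θ2 + θ3 = 2 * τ + π + n * (2 * π) := by
    have h : ((θ1 + θ2 + θ3 : ℝ) : ℂ) * Complex.I =
        ((2 * τ + π + n * (2 * π) : ℝ) : ℂ) * Complex.I := by
      rw [hn]; push_cast; ring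
    exact_mod_cast mul_right_cancel₀ Complex.I_ne_zero h
  have hpi := pi_pos
  have hn0 : n < 1 := by
    by_contra hcon
    have : (1 : ℝ) ≤ n := by exact_mod_cast not_lt.1 hcon
    nlinarith
  have : (n : ℝ) ≤ 0 := by exact_mod_cast Int.lt_add_one_iff.1 hn0
  nlinarith

/-- determinant -/
def det3 (u v w : E3) : ℝ :=
  u 0 * (v 1 * w 2 - v 2 * w 1) - u 1 * (v 0 * w 2 - v 2 * w 0) + u 2 * (v 0 * w 1 - v 1 * w 0)

/-- cross product -/
def cr (u v : E3) : E3 :=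
  !₂[u 1 * v 2 - u 2 * v 1, u 2 * v 0 - u 0 * v 2, u 0 * v 1 - u 1 * v 0]

lemma inner_e3 (x y : E3) : inner ℝ x y = x 0 * y 0 + x 1 * y 1 + x 2 * y 2 := by
  rw [PiLp.inner_apply, Fin.sum_univ_three]; simp; ring

lemma nsq_e3 (x : E3) : ‖x‖ ^ 2 = x 0 ^ 2 + x 1 ^ 2 + x 2 ^ 2 := by
  rw [← real_inner_self_eq_norm_sq, inner_e3]; ring

lemma inner_cr (u v w : E3) : inner ℝ (cr u v) w = det3 u v w := by
  rw [inner_e3]; simp [cr, det3]; ring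

lemma inner_cr_cr (u v w z : E3) : inner ℝ (cr u v) (cr w z) =
    inner ℝ u w * inner ℝ v z - inner ℝ u z * inner ℝ v w := by
  simp only [inner_e3]; simp [cr]; ring

lemma nsq_cr (u v : E3) : ‖cr u v‖ ^ 2 = ‖u‖ ^ 2 * ‖v‖ ^ 2 - inner ℝ u v ^ 2 := by
  simp only [nsq_e3, inner_e3]; simp [cr]; ring

lemma det3_sq (u v w : E3) : det3 u v w ^ 2 = ‖u‖ ^ 2 * ‖v‖ ^ 2 * ‖w‖ ^ 2
    + 2 * inner ℝ v w * inner ℝ w u * inner ℝ u v - ‖u‖ ^ 2 * inner ℝ v w ^ 2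
    - ‖v‖ ^ 2 * inner ℝ w u ^ 2 - ‖w‖ ^ 2 * inner ℝ u v ^ 2 := by
  simp only [nsq_e3, inner_e3, det3]; ring

/-- the denominator in the solid angle formula -/
def Asol (u v w : E3) : ℝ := ‖u‖ * ‖v‖ * ‖w‖ + ‖u‖ * inner ℝ v w + ‖v‖ * inner ℝ w u
  + ‖w‖ * inner ℝ u v

lemma solid_open (u v w : E3) (hD : 0 < det3 u v w) (hA : 0 < Asol u v w) :
    (volume {x : E3 | ‖x‖ ≤ 1 ∧ (0 < inner ℝ (cr v w) x ∧ 0 < inner ℝ (cr w u) x ∧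
      0 < inner ℝ (cr u v) x)}).toReal ≤ 2 / 3 * arctan (det3 u v w / Asol u v w) := by
  have d1 : inner ℝ (cr v w) u = det3 u v w := by rw [inner_cr]; simp only [det3]; ring
  have d2 : inner ℝ (cr w u) v = det3 u v w := by rw [inner_cr]; simp only [det3]; ring
  have d3 : inner ℝ (cr u v) w = det3 u v w := by rw [inner_cr]
  have n1 : cr v w ≠ 0 := by intro h; rw [h, inner_zero_left] at d1; linarith
  have n2 : cr w u ≠ 0 := by intro h; rw [h, inner_zero_left] at d2; linarith
  have n3 : cr u v ≠ 0 := by intro h; rw [h, inner_zero_left] at d3; linarith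
  have g := girard _ _ _ n1 n2 n3
  set α := InnerProductGeometry.angle (cr v w) (cr w u) with hα
  set β := InnerProductGeometry.angle (cr w u) (cr u v) with hβ
  set γ := InnerProductGeometry.angle (cr v w) (cr u v) with hγ
  have N1 : 0 < ‖cr v w‖ := norm_pos_iff.2 n1
  have N2 : 0 < ‖cr w u‖ := norm_pos_iff.2 n2
  have N3 : 0 < ‖cr u v‖ := norm_pos_iff.2 n3
  have sD := det3_sq u v w
  have s1 := nsq_cr v w
  have s2 := nsq_cr w u
  have s3 := nsq_cr u v
  have hc : ∀ x y : E3, cos (π - InnerProductGeometry.angle x y) * (‖x‖ * ‖y‖) = - inner ℝ x y := by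
    intro x y
    rw [cos_pi_sub, neg_mul, InnerProductGeometry.cos_angle_mul_norm_mul_norm]
  have hs : ∀ (x y : E3) (t : ℝ), 0 ≤ t → t ^ 2 = ‖x‖ ^ 2 * ‖y‖ ^ 2 - (inner ℝ x y) ^ 2 →
      sin (π - InnerProductGeometry.angle x y) * (‖x‖ * ‖y‖) = t := by
    intro x y t ht h
    rw [sin_pi_sub]
    have h0 : 0 ≤ sin (InnerProductGeometry.angle x y) :=
      InnerProductGeometry.sin_angle_nonneg x y
    have h1 := InnerProductGeometry.cos_angle_mul_norm_mul_norm x y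
    rw [← sq_eq_sq₀ (by positivity) ht, h, ← h1]
    have := sin_sq_add_cos_sq (InnerProductGeometry.angle x y)
    linear_combination (‖x‖ * ‖y‖) ^ 2 * this
  have huu : ∀ x : E3, inner ℝ x x = ‖x‖ ^ 2 := fun x => real_inner_self_eq_norm_sq x
  have cvu : inner ℝ v u = inner ℝ u v := real_inner_comm _ _
  have cwv : inner ℝ w v = inner ℝ v w := real_inner_comm _ _
  have cuw : inner ℝ u w = inner ℝ w u := real_inner_comm _ _
  have key := trihedral_trig ‖u‖ ‖v‖ ‖w‖ (inner ℝ v w) (inner ℝ w u) (inner ℝ u v)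
    (det3 u v w) (Asol u v w) ‖cr v w‖ ‖cr w u‖ ‖cr u v‖ (π - β) (π - γ) (π - α) hD hA N1 N2 N3
    s1 s2 s3 sD rfl
    (by rw [hβ, hc, inner_cr_cr]; simp only [huu, cvu, cwv, cuw]; ring)
    (by
      apply hs _ _ _ (by positivity)
      rw [inner_cr_cr, s2, s3, mul_pow, sD]; simp only [huu, cvu, cwv, cuw]; ring)
    (by rw [hγ, mul_comm ‖cr u v‖, hc, inner_cr_cr]; simp only [huu, cvu, cwv, cuw]; ring)
    (by
      rw [mul_comm ‖cr u v‖]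
      apply hs _ _ _ (by positivity)
      rw [inner_cr_cr, s1, s3, mul_pow, sD]; simp only [huu, cvu, cwv, cuw]; ring)
    (by rw [hα, hc, inner_cr_cr]; simp only [huu, cvu, cwv, cuw]; ring)
    (by
      apply hs _ _ _ (by positivity)
      rw [inner_cr_cr, s1, s2, mul_pow, sD]; simp only [huu, cvu, cwv, cuw]; ring)
    (by linarith [InnerProductGeometry.angle_nonneg (cr w u) (cr u v)])
    (by linarith [InnerProductGeometry.angle_nonneg (cr v w) (cr u v)])
    (by linarith [InnerProductGeometry.angle_nonneg (cr v w) (cr w u)])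
  linarith

lemma plane_null (n : E3) (hn : n ≠ 0) : volume {x : E3 | inner ℝ n x = 0} = 0 := by
  have h := Measure.addHaar_submodule (volume : Measure E3) (Submodule.span ℝ {n})ᗮ (by
    intro h
    have : n ∈ (Submodule.span ℝ {n})ᗮ := by rw [h]; trivial
    rw [Submodule.mem_orthogonal_singleton_iff_inner_right] at this
    exact hn (inner_self_eq_zero.1 this))
  convert h using 2
  ext x
  simp only [Set.mem_ofPred_eq, SetLike.mem_coe]
  rw [Submodule.mem_orthogonal_singleton_iff_inner_right]

lemma vertex_pos (o p q r : E3) (hD : 0 < det3 (p - o) (q - o) (r - o))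
    (hA : 0 < Asol (p - o) (q - o) (r - o)) :
    (volume (convexHull ℝ ({o, p, q, r} : Set E3) ∩ Metric.closedBall o 1)).toReal ≤
      2 / 3 * arctan (det3 (p - o) (q - o) (r - o) / Asol (p - o) (q - o) (r - o)) := by
  refine le_trans ?_ (solid_open _ _ _ hD hA)
  set u := p - o with hu
  set v := q - o with hv
  set w := r - o with hw
  have d1 : inner ℝ (cr v w) u = det3 u v w := by rw [inner_cr]; simp only [det3]; ring
  have d2 : inner ℝ (cr w u) v = det3 u v w := by rw [inner_cr]; simp only [det3]; ring
  have d3 : inner ℝ (cr u v) w = det3 u v w := by rw [inner_cr]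
  have n1 : cr v w ≠ 0 := by intro h; rw [h, inner_zero_left] at d1; linarith
  have n2 : cr w u ≠ 0 := by intro h; rw [h, inner_zero_left] at d2; linarith
  have n3 : cr u v ≠ 0 := by intro h; rw [h, inner_zero_left] at d3; linarith
  set O := {x : E3 | ‖x‖ ≤ 1 ∧ (0 < inner ℝ (cr v w) x ∧ 0 < inner ℝ (cr w u) x ∧
      0 < inner ℝ (cr u v) x)} with hO
  set Z := {x : E3 | inner ℝ (cr v w) x = 0} ∪ {x : E3 | inner ℝ (cr w u) x = 0} ∪
    {x : E3 | inner ℝ (cr u v) x = 0} with hZ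
  have hZ0 : volume Z = 0 := by
    rw [hZ, measure_union_null_iff, measure_union_null_iff]
    exact ⟨⟨plane_null _ n1, plane_null _ n2⟩, plane_null _ n3⟩
  have hhalf : ∀ n : E3, 0 ≤ inner ℝ n u → 0 ≤ inner ℝ n v → 0 ≤ inner ℝ n w →
      ∀ x ∈ convexHull ℝ ({o, p, q, r} : Set E3), 0 ≤ inner ℝ n (x - o) := by
    intro n h1 h2 h3
    have hconv : Convex ℝ {x : E3 | inner ℝ n o ≤ inner ℝ n x} :=
      convex_halfSpace_ge (f := fun x : E3 => inner ℝ n x)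
        ⟨fun x y => inner_add_right _ _ _, fun c x => by rw [inner_smul_right]; rfl⟩ _
    have := convexHull_min (s := ({o, p, q, r} : Set E3)) (by
      intro x hx
      simp only [Set.mem_insert_iff, Set.mem_singleton_iff] at hx
      rw [hu, inner_sub_right] at h1
      rw [hv, inner_sub_right] at h2
      rw [hw, inner_sub_right] at h3
      simp only [Set.mem_ofPred_eq]
      rcases hx with rfl | rfl | rfl | rfl <;> linarith) hconv
    intro x hx
    have := this hx
    simp only [Set.mem_ofPred_eq] at this
    rw [inner_sub_right]; linarith
  have z1 : inner ℝ (cr v w) v = 0 := by rw [inner_cr]; simp only [det3]; ring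
  have z2 : inner ℝ (cr v w) w = 0 := by rw [inner_cr]; simp only [det3]; ring
  have z3 : inner ℝ (cr w u) w = 0 := by rw [inner_cr]; simp only [det3]; ring
  have z4 : inner ℝ (cr w u) u = 0 := by rw [inner_cr]; simp only [det3]; ring
  have z5 : inner ℝ (cr u v) u = 0 := by rw [inner_cr]; simp only [det3]; ring
  have z6 : inner ℝ (cr u v) v = 0 := by rw [inner_cr]; simp only [det3]; ring
  have hsub : convexHull ℝ ({o, p, q, r} : Set E3) ∩ Metric.closedBall o 1 ⊆
      (fun x => x - o) ⁻¹' (O ∪ Z) := by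
    rintro x ⟨hx, hb⟩
    have i1 := hhalf (cr v w) (by rw [d1]; exact hD.le) (by rw [z1]) (by rw [z2]) x hx
    have i2 := hhalf (cr w u) (by rw [z4]) (by rw [d2]; exact hD.le) (by rw [z3]) x hx
    have i3 := hhalf (cr u v) (by rw [z5]) (by rw [z6]) (by rw [d3]; exact hD.le) x hx
    rw [Metric.mem_closedBall, dist_eq_norm] at hb
    simp only [hO, hZ, Set.mem_preimage, Set.mem_union, Set.mem_ofPred_eq]
    rcases i1.lt_or_eq with j1 | j1 <;> rcases i2.lt_or_eq with j2 | j2 <;>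
      rcases i3.lt_or_eq with j3 | j3 <;> simp_all
  have hOf : volume O ≠ ⊤ := by
    refine ((measure_mono (t := Metric.closedBall 0 1) ?_).trans_lt measure_closedBall_lt_top).ne
    intro x hx; simpa using hx.1
  apply ENNReal.toReal_mono hOf
  calc _ ≤ volume ((fun x => x - o) ⁻¹' (O ∪ Z)) := measure_mono hsub
    _ = volume (O ∪ Z) := by
        simp only [sub_eq_add_neg]; exact measure_preimage_add_right _ _ _
    _ ≤ volume O + volume Z := measure_union_le _ _
    _ = volume O := by rw [hZ0, add_zero]

lemma vertex_bound (o p q r : E3) (hD : det3 (p - o) (q - o) (r - o) ≠ 0)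
    (hA : 0 < Asol (p - o) (q - o) (r - o)) :
    (volume (convexHull ℝ ({o, p, q, r} : Set E3) ∩ Metric.closedBall o 1)).toReal ≤
      2 / 3 * arctan (|det3 (p - o) (q - o) (r - o)| / Asol (p - o) (q - o) (r - o)) := by
  rcases hD.lt_or_gt with h | h
  · have e1 : det3 (p - o) (r - o) (q - o) = - det3 (p - o) (q - o) (r - o) := by
      simp only [det3]; ring
    have e2 : Asol (p - o) (r - o) (q - o) = Asol (p - o) (q - o) (r - o) := by
      simp only [Asol, real_inner_comm]; ring_nf
    have := vertex_pos o p r q (by rw [e1]; linarith) (by rw [e2]; exact hA)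
    rw [e1, e2, Set.pair_comm r q] at this
    rwa [abs_of_neg h]
  · rw [abs_of_pos h]; exact vertex_pos o p q r h hA

lemma tri_vol (t : ℝ) (ht : 0 ≤ t) :
    volume {q : ℝ × ℝ | q.1 ∈ Set.Ioc 0 t ∧ q.2 ∈ Set.Ioo 0 (t - q.1)} = ENNReal.ofReal (t ^ 2 / 2) := by
  have h := volume_regionBetween_eq_integral (μ := (volume : Measure ℝ)) (f := fun _ : ℝ => (0 : ℝ))
    (g := fun x => t - x) (s := Set.Ioc 0 t)
    (Continuous.integrableOn_Ioc (by fun_prop)) (Continuous.integrableOn_Ioc (by fun_prop))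
    measurableSet_Ioc (by intro x hx; simpa using hx.2)
  rw [← Measure.volume_eq_prod] at h
  have e : {q : ℝ × ℝ | q.1 ∈ Set.Ioc 0 t ∧ q.2 ∈ Set.Ioo 0 (t - q.1)} =
    regionBetween (fun _ : ℝ => (0 : ℝ)) (fun x => t - x) (Set.Ioc 0 t) := by
    ext q; simp [regionBetween]
  rw [e, h, ← intervalIntegral.integral_of_le ht]
  congr 1
  simp only [Pi.sub_apply, sub_zero]
  rw [intervalIntegral.integral_comp_sub_left (fun x => x) t]
  simp

lemma corner_vol : ENNReal.ofReal (1 / 6) ≤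
    volume {x : E3 | 0 ≤ x 0 ∧ 0 ≤ x 1 ∧ 0 ≤ x 2 ∧ x 0 + x 1 + x 2 ≤ 1} := by
  set S : Set (ℝ × ℝ × ℝ) := {q | 0 ≤ q.2.1 ∧ 0 ≤ q.2.2 ∧ 0 ≤ q.1 ∧ q.2.1 + q.2.2 + q.1 ≤ 1} with hS
  have hSm : MeasurableSet S := by
    refine meas_and (measurableSet_le (by fun_prop) (by fun_prop))
      (meas_and (measurableSet_le (by fun_prop) (by fun_prop))
      (meas_and (measurableSet_le (by fun_prop) (by fun_prop))
      (measurableSet_le (by fun_prop) (by fun_prop))))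
  have e1 : {x : E3 | 0 ≤ x 0 ∧ 0 ≤ x 1 ∧ 0 ≤ x 2 ∧ x 0 + x 1 + x 2 ≤ 1} = toProd ⁻¹' S := by
    ext x; simp [toProd, hS]
  rw [e1, toProd_mp.measure_preimage hSm.nullMeasurableSet, Measure.volume_eq_prod,
    Measure.prod_apply hSm]
  have hIntOn : IntegrableOn (fun z : ℝ => (1 - z) ^ 2 / 2) (Set.Ioc 0 1) :=
    Continuous.integrableOn_Ioc (by fun_prop)
  calc ENNReal.ofReal (1 / 6) = ENNReal.ofReal (∫ z in Set.Ioc (0:ℝ) 1, (1 - z) ^ 2 / 2) := by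
        congr 1
        rw [← intervalIntegral.integral_of_le zero_le_one]
        rw [intervalIntegral.integral_comp_sub_left (fun z => z ^ 2 / 2) 1]
        simp
        norm_num
    _ = ∫⁻ z in Set.Ioc (0:ℝ) 1, ENNReal.ofReal ((1 - z) ^ 2 / 2) :=
        ofReal_integral_eq_lintegral_ofReal hIntOn (Filter.Eventually.of_forall fun z => by positivity)
    _ ≤ ∫⁻ z in Set.Ioc (0:ℝ) 1, volume (Prod.mk z ⁻¹' S) := by
        apply setLIntegral_mono' measurableSet_Ioc
        intro z hz
        rw [← tri_vol (1 - z) (by linarith [hz.2])]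
        apply measure_mono
        rintro ⟨x, y⟩ ⟨⟨a1, a2⟩, b1, b2⟩
        simp only at a1 a2 b1 b2
        exact ⟨a1.le, b1.le, hz.1.le, by simp only; linarith⟩
    _ ≤ _ := setLIntegral_le_lintegral _ _

/-- the reference simplex -/
def stdS : Set E3 := convexHull ℝ {0, EuclideanSpace.single 0 1, EuclideanSpace.single 1 1,
  EuclideanSpace.single 2 1}

lemma stdS_vol : ENNReal.ofReal (1 / 6) ≤ volume stdS := by
  refine corner_vol.trans (measure_mono ?_)
  rintro x ⟨h0, h1, h2, h3⟩
  have hc := convex_convexHull ℝ ({0, EuclideanSpace.single 0 1, EuclideanSpace.single 1 1,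
    EuclideanSpace.single 2 1} : Set E3)
  have := hc.sum_mem (t := Finset.univ) (w := ![1 - x 0 - x 1 - x 2, x 0, x 1, x 2])
    (z := ![0, EuclideanSpace.single 0 1, EuclideanSpace.single 1 1, EuclideanSpace.single 2 1])
    (by intro i _; fin_cases i <;> simp <;> linarith) (by simp [Fin.sum_univ_four]; ring)
    (by intro i _; apply subset_convexHull; fin_cases i <;> simp)
  have hx : ∑ i, (![1 - x 0 - x 1 - x 2, x 0, x 1, x 2] i : ℝ) • (![0, EuclideanSpace.single 0 1,
      EuclideanSpace.single 1 1, EuclideanSpace.single 2 1] i : E3) = x := by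
    ext i
    fin_cases i <;> simp [Fin.sum_univ_four]
  rw [hx] at this
  exact this

lemma simplex_vol (o p q r : E3) : volume (convexHull ℝ ({o, p, q, r} : Set E3)) =
    ENNReal.ofReal |det3 (p - o) (q - o) (r - o)| * volume stdS := by
  set u := p - o with hu
  set v := q - o with hv
  set w := r - o with hw
  set B := (EuclideanSpace.basisFun (Fin 3) ℝ).toBasis with hB
  set M : Matrix (Fin 3) (Fin 3) ℝ := Matrix.of ![![u 0, v 0, w 0], ![u 1, v 1, w 1], ![u 2, v 2, w 2]] with hM
  set T : E3 →ₗ[ℝ] E3 := Matrix.toLin B B M with hT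
  have hdet : LinearMap.det T = det3 u v w := by
    rw [hT, LinearMap.det_toLin, Matrix.det_fin_three]
    simp [hM, det3]; ring
  have hBi : ∀ i, B i = EuclideanSpace.single i 1 := by intro i; simp [hB]
  have hTi : ∀ i, T (EuclideanSpace.single i 1) = ![u, v, w] i := by
    intro i
    rw [← hBi, hT, Matrix.toLin_self]
    simp only [hBi]
    ext j
    fin_cases i <;> fin_cases j <;> simp [Fin.sum_univ_three, hM]
  have himg : convexHull ℝ ({o, p, q, r} : Set E3) = (fun x => o + x) '' (T '' stdS) := by
    have := (AffineEquiv.constVAdd ℝ E3 o).toAffineMap.image_convexHull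
      (T '' {0, EuclideanSpace.single 0 1, EuclideanSpace.single 1 1, EuclideanSpace.single 2 1})
    rw [stdS, T.image_convexHull]
    refine Eq.trans ?_ this.symm
    congr 1
    simp only [Set.image_insert_eq, Set.image_singleton, hTi, map_zero]
    simp [hu, hv, hw]
  rw [himg, Set.image_add_left, measure_preimage_add, Measure.addHaar_image_linearMap, hdet]

/-- solid angle denominator in terms of edges -/
def Ay (y1 y2 y3 z1 z2 z3 : ℝ) : ℝ := y1 * y2 * y3 + (y1 * (y2 ^ 2 + y3 ^ 2 - z1 ^ 2)
  + y2 * (y1 ^ 2 + y3 ^ 2 - z2 ^ 2) + y3 * (y1 ^ 2 + y2 ^ 2 - z3 ^ 2)) / 2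

lemma Ay_lower (a b c d e f : ℝ) (ha : 0 ≤ a) (hb : 0 ≤ b) (hc : 0 ≤ c)
    (hd : 0 ≤ d) (he : 0 ≤ e) (hf : 0 ≤ f) (hd' : d ≤ 0.51) (he' : e ≤ 0.51) (hf' : f ≤ 0.51) :
    20 + 14 * (a + b + c) + 2 * (a + b + c) ^ 2 - 4.51 * (d + e + f)
      - 2.255 * (a + b + c) * (d + e + f) ≤ Ay (2 + a) (2 + b) (2 + c) (2 + d) (2 + e) (2 + f) := by
  have h1 : 0 ≤ (2 + a) * (d * (0.51 - d)) := by
    have : 0 ≤ 0.51 - d := by linarith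
    positivity
  have h2 : 0 ≤ (2 + b) * (e * (0.51 - e)) := by
    have : 0 ≤ 0.51 - e := by linarith
    positivity
  have h3 : 0 ≤ (2 + c) * (f * (0.51 - f)) := by
    have : 0 ≤ 0.51 - f := by linarith
    positivity
  have h4 : 0 ≤ 2 * (a * b + b * c + c * a) + a * b * c + (a * (b ^ 2 + c ^ 2) + b * (a ^ 2 + c ^ 2)
    + c * (a ^ 2 + b ^ 2)) / 2 + 2.255 * (a * (e + f) + b * (d + f) + c * (d + e)) := by positivity
  have : Ay (2 + a) (2 + b) (2 + c) (2 + d) (2 + e) (2 + f) -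
      (20 + 14 * (a + b + c) + 2 * (a + b + c) ^ 2 - 4.51 * (d + e + f)
      - 2.255 * (a + b + c) * (d + e + f)) =
      2 * (a * b + b * c + c * a) + a * b * c + (a * (b ^ 2 + c ^ 2) + b * (a ^ 2 + c ^ 2)
    + c * (a ^ 2 + b ^ 2)) / 2 + 2.255 * (a * (e + f) + b * (d + f) + c * (d + e))
    + ((2 + a) * (d * (0.51 - d)) + (2 + b) * (e * (0.51 - e)) + (2 + c) * (f * (0.51 - f))) / 2 := by
    simp only [Ay]; ring
  linarith

lemma inv_bound (α β u w m A : ℝ) (hu : 0 ≤ u) (hw : 0 ≤ w) (hum : u ≤ m) (hwm : w ≤ m)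
    (hm : m ≤ 1.53) (hα : 0.018 ≤ α) (hα' : α ≤ 0.02) (hβ : 0.0165 ≤ β) (hβ' : β ≤ 0.018)
    (hb : 0.2255 ≤ β * (20 - 4.51 * m))
    (ha : 0 ≤ 0.7 - 20 * α + (0.1 - 14 * α) * m - 2 * α * m ^ 2)
    (hA : 20 + 14 * u + 2 * u ^ 2 - 4.51 * w - 2.255 * u * w ≤ A) :
    0 < A ∧ 1 / A ≤ 1 / 20 - α * u + β * w := by
  have hA0 : 0 < A := by nlinarith [mul_nonneg hu (by linarith : 0 ≤ 1.53 - w)]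
  refine ⟨hA0, ?_⟩
  have hα0 : 0 ≤ α := by linarith
  have hL : 0 ≤ 1 / 20 - α * u + β * w := by
    have : α * u ≤ 0.02 * 1.53 := by
      apply mul_le_mul <;> linarith
    have : 0 ≤ β * w := by apply mul_nonneg <;> linarith
    linarith
  rw [div_le_iff₀ hA0]
  refine le_trans ?_ (mul_le_mul_of_nonneg_left hA hL)
  have t1 : 0 ≤ w * (20 * β - 0.2255 - 4.51 * β * w) := by
    apply mul_nonneg hw
    nlinarith [mul_nonneg (by linarith : 0 ≤ β) (by linarith : 0 ≤ m - w)]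
  have t2 : 0 ≤ u * (0.7 - 20 * α + (0.1 - 14 * α) * u - 2 * α * u ^ 2) := by
    apply mul_nonneg hu
    have : 0 ≤ (m - u) * (14 * α - 0.1 + 2 * α * (m + u)) := by
      apply mul_nonneg (by linarith)
      have : 0 ≤ 2 * α * (m + u) := by
        apply mul_nonneg <;> linarith
      linarith
    nlinarith
  have t3 : 0 ≤ u * w * (-0.11275 + 4.51 * α + 14 * β + 2 * β * u - 2.255 * β * w + 2.255 * α * u) := by
    apply mul_nonneg (mul_nonneg hu hw)
    have e1 : 0 ≤ 2 * β * u := by apply mul_nonneg <;> linarith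
    have e2 : 0 ≤ 2.255 * α * u := by apply mul_nonneg <;> linarith
    have e3 : β * w ≤ 0.018 * 1.53 := by apply mul_le_mul <;> linarith
    linarith
  nlinarith

set_option maxHeartbeats 2000000 in
lemma gram_bound (h1 h2 h3 k1 k2 k3 : ℝ) (a1 : 0 ≤ h1) (a2 : 0 ≤ h2) (a3 : 0 ≤ h3)
    (b1 : 0 ≤ k1) (b2 : 0 ≤ k2) (b3 : 0 ≤ k3) (a1' : h1 ≤ 2.3001) (a2' : h2 ≤ 2.3001)
    (a3' : h3 ≤ 2.3001) (b1' : k1 ≤ 2.3001) (b2' : k2 ≤ 2.3001) (b3' : k3 ≤ 2.3001)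
    (X1 X2 X3 p q r : ℝ) (e1 : X1 = 4 + h1) (e2 : X2 = 4 + h2) (e3 : X3 = 4 + h3)
    (ep : p = (X2 + X3 - (4 + k1)) / 2) (eq : q = (X1 + X3 - (4 + k2)) / 2)
    (er : r = (X1 + X2 - (4 + k3)) / 2) :
    X1 * X2 * X3 + 2 * p * q * r - X1 * p ^ 2 - X2 * q ^ 2 - X3 * r ^ 2 ≤
      32 + 10 * (h1 + h2 + h3 + k1 + k2 + k3) := by
  obtain ⟨m1, hm1⟩ : ∃ m, m = h1 + k1 := ⟨_, rfl⟩
  obtain ⟨m2, hm2⟩ : ∃ m, m = h2 + k2 := ⟨_, rfl⟩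
  obtain ⟨m3, hm3⟩ : ∃ m, m = h3 + k3 := ⟨_, rfl⟩
  have id : 4 * (X1 * X2 * X3 + 2 * p * q * r - X1 * p ^ 2 - X2 * q ^ 2 - X3 * r ^ 2) =
      128 + 16 * (m1 + m2 + m3) + 8 * (h1 * k1 + h2 * k2 + h3 * k3)
      + 4 * (m1 * m2 + m2 * m3 + m1 * m3) - 4 * (m1 ^ 2 + m2 ^ 2 + m3 ^ 2)
      + h1 * k1 * (m2 + m3 - m1) + h2 * k2 * (m1 + m3 - m2) + h3 * k3 * (m1 + m2 - m3)
      - (k1 * k2 * k3 + h2 * h3 * k1 + h1 * h3 * k2 + h1 * h2 * k3) := by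
    rw [ep, eq, er, e1, e2, e3, hm1, hm2, hm3]; ring
  clear ep eq er e1 e2 e3
  have pm1 : 0 ≤ m1 := by linarith
  have pm2 : 0 ≤ m2 := by linarith
  have pm3 : 0 ≤ m3 := by linarith
  have f : 0 ≤ k1 * k2 * k3 + h2 * h3 * k1 + h1 * h3 * k2 + h1 * h2 * k3 := by positivity
  have cub : ∀ h k m n l : ℝ, 0 ≤ h → 0 ≤ k → h ≤ 2.3001 → k ≤ 2.3001 → m = h + k → 0 ≤ n →
      n ≤ 9.2004 → n - m = l → h * k * l ≤ 10.6 * m := by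
    intro h k m n l hh hk hh' hk' hm hn hn' hl
    have i1 : h * k ≤ 1.15005 * m := by
      rw [hm]
      nlinarith [mul_nonneg hh (by linarith : 0 ≤ 2.3001 - k), mul_nonneg hk (by linarith : 0 ≤ 2.3001 - h)]
    have i2 : 0 ≤ h * k := mul_nonneg hh hk
    have i3 : h * k * l ≤ h * k * 9.2004 := by
      apply mul_le_mul_of_nonneg_left _ i2
      linarith
    linarith
  have c1 := cub h1 k1 m1 (m2 + m3) _ a1 b1 a1' b1' hm1 (by linarith) (by linarith) rfl
  have c2 := cub h2 k2 m2 (m1 + m3) _ a2 b2 a2' b2' hm2 (by linarith) (by linarith) rfl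
  have c3 := cub h3 k3 m3 (m1 + m2) _ a3 b3 a3' b3' hm3 (by linarith) (by linarith) rfl
  have q1 : 4 * (h1 * k1) ≤ m1 ^ 2 := by rw [hm1]; nlinarith [sq_nonneg (h1 - k1)]
  have q2 : 4 * (h2 * k2) ≤ m2 ^ 2 := by rw [hm2]; nlinarith [sq_nonneg (h2 - k2)]
  have q3 : 4 * (h3 * k3) ≤ m3 ^ 2 := by rw [hm3]; nlinarith [sq_nonneg (h3 - k3)]
  have q4 : m1 * m2 + m2 * m3 + m1 * m3 ≤ m1 ^ 2 + m2 ^ 2 + m3 ^ 2 := by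
    nlinarith [sq_nonneg (m1 - m2), sq_nonneg (m2 - m3), sq_nonneg (m1 - m3)]
  have r1 := mul_nonneg pm1 (by linarith : 0 ≤ 4.6002 - m2)
  have r2 := mul_nonneg pm2 (by linarith : 0 ≤ 4.6002 - m3)
  have r3 := mul_nonneg pm3 (by linarith : 0 ≤ 4.6002 - m1)
  have q5 : m1 * m2 + m2 * m3 + m1 * m3 ≤ 4.6002 * (m1 + m2 + m3) := by
    clear id c1 c2 c3 q1 q2 q3 q4 cub f
    linarith
  have hM : h1 + h2 + h3 + k1 + k2 + k3 = m1 + m2 + m3 := by linarith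
  have hM0 : 0 ≤ m1 + m2 + m3 := by linarith
  rw [hM]
  clear r1 r2 r3 cub hM hm1 hm2 hm3 pm1 pm2 pm3 a1 a2 a3 b1 b2 b3 a1' a2' a3' b1' b2' b3'
  linarith

lemma arctan_tangent (t s : ℝ) (hs : 0 ≤ s) (ht : 0 ≤ t) :
    arctan t ≤ arctan s + (t - s) / (1 + s ^ 2) := by
  rcases lt_trichotomy s t with h | h | h
  · obtain ⟨c, hc, he⟩ := exists_hasDerivAt_eq_slope arctan (fun x => 1 / (1 + x ^ 2)) h
      continuous_arctan.continuousOn (fun x _ => hasDerivAt_arctan x)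
    have h1 : 1 / (1 + c ^ 2) ≤ 1 / (1 + s ^ 2) := by
      apply one_div_le_one_div_of_le (by positivity)
      nlinarith [hc.1]
    rw [he, div_le_iff₀ (by linarith)] at h1
    have : (t - s) / (1 + s ^ 2) = 1 / (1 + s ^ 2) * (t - s) := by ring
    linarith
  · subst h; simp
  · obtain ⟨c, hc, he⟩ := exists_hasDerivAt_eq_slope arctan (fun x => 1 / (1 + x ^ 2)) h
      continuous_arctan.continuousOn (fun x _ => hasDerivAt_arctan x)
    have h1 : 1 / (1 + s ^ 2) ≤ 1 / (1 + c ^ 2) := by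
      apply one_div_le_one_div_of_le (by positivity)
      nlinarith [hc.1, hc.2]
    rw [he, le_div_iff₀ (by linarith)] at h1
    have : (t - s) / (1 + s ^ 2) = - (1 / (1 + s ^ 2) * (s - t)) := by ring
    linarith

lemma arctan_cubic (x : ℝ) (hx : 0 ≤ x) : x - x ^ 3 / 3 ≤ arctan x := by
  have hd : ∀ y : ℝ, HasDerivAt (fun x => arctan x - (x - x ^ 3 / 3))
      (1 / (1 + y ^ 2) - (1 - (3 * y ^ 2) / 3)) y := by
    intro y
    have h := (hasDerivAt_arctan y).sub ((hasDerivAt_id y).sub ((hasDerivAt_pow 3 y).div_const 3))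
    exact h.congr_deriv (by norm_num)
  have hm : Monotone (fun x => arctan x - (x - x ^ 3 / 3)) := by
    apply monotone_of_deriv_nonneg
    · intro y; exact (hd y).differentiableAt
    · intro y
      rw [(hd y).deriv]
      have : 1 / (1 + y ^ 2) - (1 - (3 * y ^ 2) / 3) = y ^ 4 / (1 + y ^ 2) := by
        field_simp; ring
      rw [this]; positivity
  have := hm hx
  simp at this
  linarith

lemma delta_eq : δoct = 3 * √2 * arctan (3 - 2 * √2) := by
  have h2 : √2 ^ 2 = 2 := Real.sq_sqrt (by norm_num)
  have h3 : √3 ^ 2 = 3 := Real.sq_sqrt (by norm_num)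
  have p2 : 0 < √2 := by positivity
  have p3 : 0 < √3 := by positivity
  have l2 : 1.4 < √2 := Real.lt_sqrt_of_sq_lt (by norm_num)
  have u2 : √2 < 1.5 := by rw [Real.sqrt_lt' (by norm_num)]; norm_num
  have h8 : √8 = 2 * √2 := by
    rw [Real.sqrt_eq_iff_mul_self_eq (by norm_num) (by positivity)]; nlinarith
  have e1 : arccos (1 / √3) = arctan √2 := by
    rw [arccos_eq_arctan (by positivity)]
    congr 1
    have : 1 - (1 / √3) ^ 2 = (√2 / √3) ^ 2 := by
      rw [div_pow, div_pow, h2, h3]; norm_num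
    rw [this, Real.sqrt_sq (by positivity)]
    field_simp
  have e2 : arctan √2 = π / 4 + arctan (3 - 2 * √2) := by
    rw [← arctan_one, arctan_add (by linarith)]
    congr 1
    rw [eq_div_iff (by linarith)]
    nlinarith
  rw [δoct, e1, e2, h8]
  field_simp
  linear_combination (-24 * arctan (3 - 2 * √2)) * h2

lemma delta_bounds : 0.7205 ≤ δoct ∧ δoct ≤ 20 / 27 := by
  have h2 : √2 ^ 2 = 2 := Real.sq_sqrt (by norm_num)
  have l2 : 1.4 < √2 := Real.lt_sqrt_of_sq_lt (by norm_num)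
  have u2 : √2 < 1.414216 := by rw [Real.sqrt_lt' (by norm_num)]; norm_num
  have hx : 0 ≤ 3 - 2 * √2 := by linarith
  rw [delta_eq]
  have h1 := arctan_cubic _ hx
  have h3 := arctan_tangent _ 0 le_rfl hx
  simp at h3
  constructor
  · have : 3 * √2 * (3 - 2 * √2 - (3 - 2 * √2) ^ 3 / 3) = 128 - 90 * √2 := by
      linear_combination (8 * √2 ^ 2 - 36 * √2 + 64) * h2
    have := mul_le_mul_of_nonneg_left h1 (by positivity : 0 ≤ 3 * √2)
    linarith
  · have := mul_le_mul_of_nonneg_left h3 (by positivity : 0 ≤ 3 * √2)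
    nlinarith

lemma pt_eq : 3 * arccos (1 / 3) - π = 2 * arctan (√2 / 5) := by
  have h2 : √2 ^ 2 = 2 := Real.sq_sqrt (by norm_num)
  have p2 : 0 < √2 := by positivity
  have e1 : arccos (1 / 3) = π / 2 - arctan (√2 / 4) := by
    rw [arccos_eq_arctan (by norm_num), ← arctan_inv_of_pos (by positivity)]
    congr 1
    have : 1 - (1 / 3 : ℝ) ^ 2 = (2 * √2 / 3) ^ 2 := by
      linear_combination (-4 / 9) * h2
    rw [this, Real.sqrt_sq (by positivity)]
    field_simp; linarith
  have e2 : arctan (√2 / 4) + arctan (√2 / 4) = arctan (4 * √2 / 7) := by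
    rw [arctan_add (by nlinarith)]
    congr 1
    have : 1 - √2 / 4 * (√2 / 4) = 7 / 8 := by linear_combination (-1/16) * h2
    rw [this]; ring
  have e3 : arctan (4 * √2 / 7) + arctan (√2 / 4) = arctan (23 * √2 / 20) := by
    rw [arctan_add (by nlinarith)]
    congr 1
    have : 1 - 4 * √2 / 7 * (√2 / 4) = 5 / 7 := by linear_combination (-1/7) * h2
    rw [this]; ring
  have e4 : arctan (√2 / 5) + arctan (√2 / 5) = arctan (10 * √2 / 23) := by
    rw [arctan_add (by nlinarith)]
    congr 1
    have : 1 - √2 / 5 * (√2 / 5) = 23 / 25 := by linear_combination (-1/25) * h2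
    rw [this]; ring
  have e5 : arctan (10 * √2 / 23) = π / 2 - arctan (23 * √2 / 20) := by
    rw [← arctan_inv_of_pos (by positivity)]
    congr 1
    field_simp; linarith
  linarith

lemma G_bound (α β m a b c d e f : ℝ) (ha : 0 ≤ a) (hb : 0 ≤ b) (hc : 0 ≤ c)
    (hd : 0 ≤ d) (he : 0 ≤ e) (hf : 0 ≤ f) (ha' : a ≤ 0.51) (hb' : b ≤ 0.51) (hc' : c ≤ 0.51)
    (hd' : d ≤ 0.51) (he' : e ≤ 0.51) (hf' : f ≤ 0.51)
    (hm : m ≤ 1.53) (hα : 0.018 ≤ α) (hα' : α ≤ 0.02) (hβ : 0.0165 ≤ β) (hβ' : β ≤ 0.018)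
    (hb0 : 0.2255 ≤ β * (20 - 4.51 * m))
    (ha0 : 0 ≤ 0.7 - 20 * α + (0.1 - 14 * α) * m - 2 * α * m ^ 2)
    (hu : a + b + c ≤ m) (hw : d + e + f ≤ m) :
    0 < Ay (2 + a) (2 + b) (2 + c) (2 + d) (2 + e) (2 + f) ∧
    1 / Ay (2 + a) (2 + b) (2 + c) (2 + d) (2 + e) (2 + f) ≤
      1 / 20 - α * (a + b + c) + β * (d + e + f) :=
  inv_bound α β (a + b + c) (d + e + f) m _ (by positivity) (by positivity) hu hw hm hα hα' hβ hβ'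
    hb0 ha0 (Ay_lower a b c d e f ha hb hc hd he hf hd' he' hf')

/-- the numerical inequality for the first order deficit -/
lemma deficit (D s g κ : ℝ) (hD : 0 ≤ D) (hs : 0 ≤ s) (hs' : s ≤ 3.06) (hκ : 0 ≤ κ)
    (hκ' : κ ≤ 0.005465)
    (hD2 : D ^ 2 ≤ 32 + 45.1 * s)
    (hg : (s ≤ 1.4 ∧ 0.0054 * s ≤ g) ∨ (1.4 ≤ s ∧ 0.00254 * s ≤ g)) :
    κ * (D - 4 * √2) ≤ D * g := by
  have h2 : √2 ^ 2 = 2 := Real.sq_sqrt (by norm_num)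
  have l2 : 1.4142 < √2 := Real.lt_sqrt_of_sq_lt (by norm_num)
  have hg0 : 0 ≤ g := by
    rcases hg with h | h <;> linarith [h.1, h.2]
  rcases le_total D (4 * √2) with h | h
  · have h1 : κ * (D - 4 * √2) ≤ 0 := mul_nonpos_of_nonneg_of_nonpos hκ (by linarith)
    have h3 : 0 ≤ D * g := mul_nonneg hD hg0
    linarith
  · have h1 : κ * (D - 4 * √2) ≤ 0.005465 * (D - 4 * √2) :=
      mul_le_mul_of_nonneg_right hκ' (by linarith)
    refine h1.trans ?_
    have h5 : 5.6568 ≤ D := by linarith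
    rcases hg with ⟨_, hg⟩ | ⟨h14, hg⟩
    · have h3 : (D - 4 * √2) * 11.3136 ≤ 45.1 * s := by
        have : (D - 4 * √2) * (D + 4 * √2) ≤ 45.1 * s := by linarith
        have : 0 ≤ (D - 4 * √2) * (D + 4 * √2 - 11.3136) := mul_nonneg (by linarith) (by linarith)
        linarith
      have h4 : 5.6568 * g ≤ D * g := mul_le_mul_of_nonneg_right h5 hg0
      linarith
    · have h6 : D ≤ 14 := by
        by_contra hc
        push Not at hc
        nlinarith
      have h7 : D * 0.003556 ≤ D * g := mul_le_mul_of_nonneg_left (by linarith) hD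
      linarith

lemma real_final (a b c d e f D : ℝ) (ha : 0 ≤ a) (hb : 0 ≤ b) (hc : 0 ≤ c)
    (hd : 0 ≤ d) (he : 0 ≤ e) (hf : 0 ≤ f) (ha' : a ≤ 0.51) (hb' : b ≤ 0.51) (hc' : c ≤ 0.51)
    (hd' : d ≤ 0.51) (he' : e ≤ 0.51) (hf' : f ≤ 0.51) (hD : 0 ≤ D)
    (hD2 : D ^ 2 ≤ 32 + 10 * (((2 + a) ^ 2 - 4) + ((2 + b) ^ 2 - 4) + ((2 + c) ^ 2 - 4)
      + ((2 + d) ^ 2 - 4) + ((2 + e) ^ 2 - 4) + ((2 + f) ^ 2 - 4)))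
    (A0 A1 A2 A3 : ℝ)
    (E0 : A0 = Ay (2 + a) (2 + b) (2 + c) (2 + d) (2 + e) (2 + f))
    (E1 : A1 = Ay (2 + a) (2 + f) (2 + e) (2 + d) (2 + c) (2 + b))
    (E2 : A2 = Ay (2 + b) (2 + f) (2 + d) (2 + e) (2 + c) (2 + a))
    (E3 : A3 = Ay (2 + c) (2 + e) (2 + d) (2 + f) (2 + b) (2 + a)) :
    (0 < A0 ∧ 0 < A1 ∧ 0 < A2 ∧ 0 < A3) ∧
    2 / 3 * arctan (D / A0) + 2 / 3 * arctan (D / A1) + 2 / 3 * arctan (D / A2)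
      + 2 / 3 * arctan (D / A3) - δoct * (D / 6) ≤
      (4 / 3) * (3 * arccos (1 / 3) - π) - δoct * (2 * √2 / 3) := by
  have key : (0 < A0 ∧ 0 < A1 ∧ 0 < A2 ∧ 0 < A3) ∧
      ((a + b + c + d + e + f ≤ 1.4 ∧ 0.0054 * (a + b + c + d + e + f) ≤
        1 / 5 - (1 / A0 + 1 / A1 + 1 / A2 + 1 / A3)) ∨
      (1.4 ≤ a + b + c + d + e + f ∧ 0.00254 * (a + b + c + d + e + f) ≤
        1 / 5 - (1 / A0 + 1 / A1 + 1 / A2 + 1 / A3))) := by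
    rw [E0, E1, E2, E3]
    rcases le_total (a + b + c + d + e + f) 1.4 with h | h
    · have B := fun a b c d e f ha hb hc hd he hf ha' hb' hc' hd' he' hf' =>
        G_bound 0.0192 0.0165 1.4 a b c d e f ha hb hc hd he hf ha' hb' hc' hd' he' hf'
          (by norm_num) (by norm_num) (by norm_num) (by norm_num) (by norm_num) (by norm_num)
          (by norm_num)
      obtain ⟨p0, i0⟩ := B a b c d e f ha hb hc hd he hf ha' hb' hc' hd' he' hf'
        (by linarith) (by linarith)
      obtain ⟨p1, i1⟩ := B a f e d c b ha hf he hd hc hb ha' hf' he' hd' hc' hb'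
        (by linarith) (by linarith)
      obtain ⟨p2, i2⟩ := B b f d e c a hb hf hd he hc ha hb' hf' hd' he' hc' ha'
        (by linarith) (by linarith)
      obtain ⟨p3, i3⟩ := B c e d f b a hc he hd hf hb ha hc' he' hd' hf' hb' ha'
        (by linarith) (by linarith)
      exact ⟨⟨p0, p1, p2, p3⟩, Or.inl ⟨h, by linarith⟩⟩
    · have B := fun a b c d e f ha hb hc hd he hf ha' hb' hc' hd' he' hf' =>
        G_bound 0.01849 0.01722 1.53 a b c d e f ha hb hc hd he hf ha' hb' hc' hd' he' hf'
          (by norm_num) (by norm_num) (by norm_num) (by norm_num) (by norm_num) (by norm_num)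
          (by norm_num)
      obtain ⟨p0, i0⟩ := B a b c d e f ha hb hc hd he hf ha' hb' hc' hd' he' hf'
        (by linarith) (by linarith)
      obtain ⟨p1, i1⟩ := B a f e d c b ha hf he hd hc hb ha' hf' he' hd' hc' hb'
        (by linarith) (by linarith)
      obtain ⟨p2, i2⟩ := B b f d e c a hb hf hd he hc ha hb' hf' hd' he' hc' ha'
        (by linarith) (by linarith)
      obtain ⟨p3, i3⟩ := B c e d f b a hc he hd hf hb ha hc' he' hd' hf' hb' ha'
        (by linarith) (by linarith)
      exact ⟨⟨p0, p1, p2, p3⟩, Or.inr ⟨h, by linarith⟩⟩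
  obtain ⟨⟨p0, p1, p2, p3⟩, hg⟩ := key
  refine ⟨⟨p0, p1, p2, p3⟩, ?_⟩
  clear E0 E1 E2 E3
  have sq : ∀ x : ℝ, 0 ≤ x → x ≤ 0.51 → (2 + x) ^ 2 - 4 ≤ 4.51 * x := by
    intro x hx hx'
    have := mul_nonneg hx (by linarith : 0 ≤ 0.51 - x)
    linarith
  obtain ⟨db1, db2⟩ := delta_bounds
  have hfin := deficit D (a + b + c + d + e + f) _ (0.2 - 0.27 * δoct) hD (by positivity)
    (by linarith) (by linarith) (by linarith)
    (by linarith [sq a ha ha', sq b hb hb', sq c hc hc', sq d hd hd', sq e he he', sq f hf hf']) hg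
  have h2 : √2 ^ 2 = 2 := Real.sq_sqrt (by norm_num)
  have tan : ∀ A : ℝ, 0 < A → arctan (D / A) ≤ arctan (√2 / 5) + 25 / 27 * (D * (1 / A) - √2 / 5) := by
    intro A hA
    have := arctan_tangent (D / A) (√2 / 5) (by positivity) (by positivity)
    have e : 1 + (√2 / 5) ^ 2 = 27 / 25 := by rw [div_pow, h2]; norm_num
    rw [e] at this
    have e' : (D / A - √2 / 5) / (27 / 25) = 25 / 27 * (D * (1 / A) - √2 / 5) := by ring
    linarith
  have t0 := tan A0 p0
  have t1 := tan A1 p1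
  have t2 := tan A2 p2
  have t3 := tan A3 p3
  rw [pt_eq]
  have hx : (2 * √2 / 3) = 4 * √2 / 6 := by ring
  clear tan sq hg db1 db2 ha hb hc hd he hf ha' hb' hc' hd' he' hf' hD2 p0 p1 p2 p3
  linarith

lemma Asol_eq (o p q r : E3) : Asol (p - o) (q - o) (r - o) =
    Ay (dist o p) (dist o q) (dist o r) (dist q r) (dist p r) (dist p q) := by
  have h : ∀ x y : E3, inner ℝ (x - o) (y - o) = (dist o x ^ 2 + dist o y ^ 2 - dist x y ^ 2) / 2 := by
    intro x y
    rw [real_inner_eq_norm_mul_self_add_norm_mul_self_sub_norm_sub_mul_self_div_two]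
    rw [dist_comm o x, dist_comm o y, dist_eq_norm, dist_eq_norm, dist_eq_norm, sub_sub_sub_cancel_right]
    ring
  rw [Asol, Ay, h, h, h, ← dist_eq_norm, ← dist_eq_norm, ← dist_eq_norm, dist_comm p o,
    dist_comm q o, dist_comm r o, dist_comm r p]
  ring

lemma det_bound (o p q r : E3) (h1 : dist o p ∈ Set.Icc (2 : ℝ) 2.51)
    (h2 : dist o q ∈ Set.Icc (2 : ℝ) 2.51)
    (h3 : dist o r ∈ Set.Icc (2 : ℝ) 2.51) (h4 : dist p q ∈ Set.Icc (2 : ℝ) 2.51)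
    (h5 : dist p r ∈ Set.Icc (2 : ℝ) 2.51) (h6 : dist q r ∈ Set.Icc (2 : ℝ) 2.51) :
    det3 (p - o) (q - o) (r - o) ^ 2 ≤ 32 + 10 * ((dist o p ^ 2 - 4) + (dist o q ^ 2 - 4)
      + (dist o r ^ 2 - 4) + (dist q r ^ 2 - 4) + (dist p r ^ 2 - 4) + (dist p q ^ 2 - 4)) := by
  have h : ∀ x y : E3, inner ℝ (x - o) (y - o) = (dist o x ^ 2 + dist o y ^ 2 - dist x y ^ 2) / 2 := by
    intro x y
    rw [real_inner_eq_norm_mul_self_add_norm_mul_self_sub_norm_sub_mul_self_div_two]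
    rw [dist_comm o x, dist_comm o y, dist_eq_norm, dist_eq_norm, dist_eq_norm, sub_sub_sub_cancel_right]
    ring
  have lo : ∀ y : ℝ, y ∈ Set.Icc (2 : ℝ) 2.51 → 0 ≤ y ^ 2 - 4 := by
    intro y hy; nlinarith [hy.1]
  have up : ∀ y : ℝ, y ∈ Set.Icc (2 : ℝ) 2.51 → y ^ 2 - 4 ≤ 2.3001 := by
    intro y hy; nlinarith [hy.1, hy.2]
  have n : ∀ x : E3, ‖x - o‖ ^ 2 = dist o x ^ 2 := by
    intro x; rw [dist_comm, dist_eq_norm]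
  have := gram_bound _ _ _ _ _ _ (lo _ h1) (lo _ h2) (lo _ h3) (lo _ h6) (lo _ h5) (lo _ h4)
    (up _ h1) (up _ h2) (up _ h3) (up _ h6) (up _ h5) (up _ h4)
    (‖p - o‖ ^ 2) (‖q - o‖ ^ 2) (‖r - o‖ ^ 2) (inner ℝ (q - o) (r - o)) (inner ℝ (r - o) (p - o))
    (inner ℝ (p - o) (q - o)) (by rw [n]; ring) (by rw [n]; ring) (by rw [n]; ring)
    (by rw [n, n, h]; ring) (by rw [n, n, h, dist_comm r p]; ring) (by rw [n, n, h]; ring)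
  rw [det3_sq]
  exact this

lemma vertex_gen (o p q r : E3) (D A : ℝ) (hD : |det3 (p - o) (q - o) (r - o)| = D)
    (hA : Asol (p - o) (q - o) (r - o) = A) (hA0 : 0 < A) :
    (volume (convexHull ℝ ({o, p, q, r} : Set E3) ∩ Metric.closedBall o 1)).toReal ≤
      2 / 3 * arctan (D / A) := by
  subst hD hA
  by_cases h : det3 (p - o) (q - o) (r - o) = 0
  · have h0 : volume (convexHull ℝ ({o, p, q, r} : Set E3)) = 0 := by
      rw [simplex_vol, h]; simp
    rw [measure_mono_null Set.inter_subset_left h0, h]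
    simp
  · exact vertex_bound o p q r h hA0

/-- A quasi-regular tetrahedron (all six pairwise distances in `[2, 2.51]`) whose
circumradius is at most `1.41` has compression at most `1 pt`. -/
theorem quasi_regular_tetrahedron_score_le_one_pt (p₀ p₁ p₂ p₃ : E3)
    (h01 : dist p₀ p₁ ∈ Set.Icc (2 : ℝ) 2.51) (h02 : dist p₀ p₂ ∈ Set.Icc (2 : ℝ) 2.51)
    (h03 : dist p₀ p₃ ∈ Set.Icc (2 : ℝ) 2.51) (h12 : dist p₁ p₂ ∈ Set.Icc (2 : ℝ) 2.51)
    (h13 : dist p₁ p₃ ∈ Set.Icc (2 : ℝ) 2.51) (h23 : dist p₂ p₃ ∈ Set.Icc (2 : ℝ) 2.51)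
    (hrad : ∃ c : E3, ∃ r : ℝ, r ≤ 1.41 ∧
      dist c p₀ = r ∧ dist c p₁ = r ∧ dist c p₂ = r ∧ dist c p₃ = r) :
    Gamma p₀ p₁ p₂ p₃ ≤ (4 / 3) * (3 * arccos (1 / 3) - π) - δoct * (2 * Real.sqrt 2 / 3) := by
  have _ := hrad
  obtain ⟨D, hD⟩ : ∃ D, |det3 (p₁ - p₀) (p₂ - p₀) (p₃ - p₀)| = D := ⟨_, rfl⟩
  have hD0 : 0 ≤ D := hD ▸ abs_nonneg _
  have s1 : ({p₁, p₀, p₂, p₃} : Set E3) = {p₀, p₁, p₂, p₃} := by ext; simp; tauto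
  have s2 : ({p₂, p₀, p₁, p₃} : Set E3) = {p₀, p₁, p₂, p₃} := by ext; simp; tauto
  have s3 : ({p₃, p₀, p₁, p₂} : Set E3) = {p₀, p₁, p₂, p₃} := by ext; simp; tauto
  have d1 : |det3 (p₀ - p₁) (p₂ - p₁) (p₃ - p₁)| = D := by
    rw [← hD, ← abs_neg]; congr 1; simp [det3]; ring
  have d2 : |det3 (p₀ - p₂) (p₁ - p₂) (p₃ - p₂)| = D := by
    rw [← hD]; congr 1; simp [det3]; ring
  have d3 : |det3 (p₀ - p₃) (p₁ - p₃) (p₂ - p₃)| = D := by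
    rw [← hD, ← abs_neg]; congr 1; simp [det3]; ring
  have hD2 := det_bound p₀ p₁ p₂ p₃ h01 h02 h03 h12 h13 h23
  rw [← sq_abs, hD] at hD2
  have A0 := Asol_eq p₀ p₁ p₂ p₃
  have A1 := Asol_eq p₁ p₀ p₂ p₃
  have A2 := Asol_eq p₂ p₀ p₁ p₃
  have A3 := Asol_eq p₃ p₀ p₁ p₂
  simp only [dist_comm p₁ p₀, dist_comm p₂ p₀, dist_comm p₃ p₀, dist_comm p₂ p₁, dist_comm p₃ p₁,
    dist_comm p₃ p₂] at A0 A1 A2 A3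
  have tw : ∀ y : ℝ, 2 + (y - 2) = y := fun y => by ring
  have lo : ∀ y : ℝ, y ∈ Set.Icc (2 : ℝ) 2.51 → 0 ≤ y - 2 := by
    intro y hy; linarith [hy.1]
  have up : ∀ y : ℝ, y ∈ Set.Icc (2 : ℝ) 2.51 → y - 2 ≤ 0.51 := by
    intro y hy; linarith [hy.2]
  obtain ⟨⟨q0, q1, q2, q3⟩, hfin⟩ := real_final _ _ _ _ _ _ D (lo _ h01) (lo _ h02) (lo _ h03)
    (lo _ h23) (lo _ h13) (lo _ h12) (up _ h01) (up _ h02) (up _ h03)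
    (up _ h23) (up _ h13) (up _ h12) hD0 (by simp only [tw]; exact hD2) _ _ _ _
    (by simp only [tw]; exact A0) (by simp only [tw]; exact A1) (by simp only [tw]; exact A2)
    (by simp only [tw]; exact A3)
  have v0 := vertex_gen p₀ p₁ p₂ p₃ D _ hD rfl q0
  have v1 := vertex_gen p₁ p₀ p₂ p₃ D _ d1 rfl q1
  have v2 := vertex_gen p₂ p₀ p₁ p₃ D _ d2 rfl q2
  have v3 := vertex_gen p₃ p₀ p₁ p₂ D _ d3 rfl q3
  rw [s1] at v1
  rw [s2] at v2
  rw [s3] at v3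
  have hvol := simplex_vol p₀ p₁ p₂ p₃
  rw [hD] at hvol
  rw [_root_.Gamma]
  have hfinS : volume (convexHull ℝ ({p₀, p₁, p₂, p₃} : Set E3)) ≠ ⊤ := by
    apply IsCompact.measure_ne_top
    apply Set.Finite.isCompact_convexHull
    exact Set.toFinite _
  have hlow : D / 6 ≤ (volume (convexHull ℝ ({p₀, p₁, p₂, p₃} : Set E3))).toReal := by
    rw [← ENNReal.ofReal_le_iff_le_toReal hfinS, hvol, div_eq_mul_one_div, ENNReal.ofReal_mul hD0]
    gcongr
    exact stdS_vol
  obtain ⟨db1, _⟩ := delta_bounds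
  have hlow' := mul_le_mul_of_nonneg_left hlow (by linarith : 0 ≤ δoct)
  set S := convexHull ℝ ({p₀, p₁, p₂, p₃} : Set E3) with hS
  have hn : ∀ B : Set E3, volume (S ∩ B) ≠ ⊤ := fun B =>
    measure_ne_top_of_subset Set.inter_subset_left hfinS
  have hU : ∀ B C : Set E3, (volume (S ∩ (B ∪ C))).toReal ≤
      (volume (S ∩ B)).toReal + (volume (S ∩ C)).toReal := by
    intro B C
    rw [← ENNReal.toReal_add (hn B) (hn C), Set.inter_union_distrib_left]
    exact ENNReal.toReal_mono (ENNReal.add_ne_top.2 ⟨hn B, hn C⟩) (measure_union_le _ _)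
  have u1 := hU (Metric.closedBall p₀ 1 ∪ Metric.closedBall p₁ 1 ∪ Metric.closedBall p₂ 1)
    (Metric.closedBall p₃ 1)
  have u2 := hU (Metric.closedBall p₀ 1 ∪ Metric.closedBall p₁ 1) (Metric.closedBall p₂ 1)
  have u3 := hU (Metric.closedBall p₀ 1) (Metric.closedBall p₁ 1)
  linarith
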